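/- Let A be a real m×n matrix. Then exactly one of the following two conditions holds: (1) there exists a nonzero row vector x ∈ ℝ^m with x ≥ 0 componentwise and xA ≤ 0 componentwise; (2) there exists a column vector y ∈ ℝⁿ with y ≥ 0 componentwise such that every entry of Ay is strictly positive. -/

import Mathlib

/-!
The nonnegative orthant and the cone generated by the columns of `A` are convex sets containing the
origin, and no `y ≥ 0` has `Ay` strictly positive exactly when the interior of the former misses the
latter. A hyperplane separating two convex sets that both contain the origin passes through the
origin; since the orthant is self-dual, the normal vector of this one is the required `x`.
-/

open Set Matrix

theorem interior_Ici_eq_setOf_strongLT {ι : Type*} [Finite ι] {α : ι → Type*}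
    [∀ i, TopologicalSpace (α i)] [∀ i, LinearOrder (α i)] [∀ i, OrderTopology (α i)]
    [∀ i, DenselyOrdered (α i)] [∀ i, NoMinOrder (α i)] (a : ∀ i, α i) :
    interior (Ici a) = {b | StrongLT a b} := by
  rw [← pi_univ_Ici, interior_pi_set finite_univ]
  simp only [interior_Ici]
  ext b
  exact mem_univ_pi

theorem geometric_hahn_banach_of_nonempty_interior_of_zero_mem {E : Type*}
    [TopologicalSpace E] [AddCommGroup E] [IsTopologicalAddGroup E] [Module ℝ E]
    [ContinuousSMul ℝ E] {s t : Set E}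
    (hs : Convex ℝ s) (ht : Convex ℝ t) (hs₀ : 0 ∈ s) (ht₀ : 0 ∈ t)
    (hst : Disjoint (interior s) t) (hsint : (interior s).Nonempty) :
    ∃ f : StrongDual ℝ E, f ≠ 0 ∧ (∀ a ∈ s, 0 ≤ f a) ∧ ∀ b ∈ t, f b ≤ 0 := by
  obtain ⟨f, u, hf, hfs, hft⟩ :=
    geometric_hahn_banach_of_nonempty_interior hs ht hst hsint ⟨0, ht₀⟩
  have hu : u = 0 := le_antisymm (by simpa using hft 0 ht₀) (by simpa using hfs 0 hs₀)
  subst hu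
  exact ⟨-f, neg_ne_zero.mpr hf, fun a ha ↦ neg_nonneg.mpr (hfs a ha),
    fun b hb ↦ neg_nonpos.mpr (hft b hb)⟩

section DotProduct

variable {ι R : Type*} [Fintype ι] [Semiring R] [PartialOrder R]

theorem forall_dotProduct_nonneg_iff [IsOrderedRing R] {x : ι → R} :
    (∀ v, 0 ≤ v → 0 ≤ x ⬝ᵥ v) ↔ 0 ≤ x := by
  classical
  refine ⟨fun h i ↦ ?_, fun hx v hv ↦ dotProduct_nonneg_of_nonneg hx hv⟩
  simpa using h (Pi.single i 1) (Pi.single_nonneg.mpr zero_le_one)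

theorem dotProduct_pos_of_nonneg_of_strongLT [IsStrictOrderedRing R] {x v : ι → R}
    (hx₀ : x ≠ 0) (hx : 0 ≤ x) (hv : StrongLT 0 v) : 0 < x ⬝ᵥ v := by
  obtain ⟨i, hi⟩ := Function.ne_iff.mp hx₀
  exact Finset.sum_pos' (fun j _ ↦ mul_nonneg (hx j) (hv j).le)
    ⟨i, Finset.mem_univ i, mul_pos ((hx i).lt_of_ne' hi) (hv i)⟩

end DotProduct

theorem forall_mem_image_mulVec_dotProduct_nonpos_iff {ι κ R : Type*} [Fintype ι] [Fintype κ]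
    [Ring R] [PartialOrder R] [IsOrderedRing R] {A : Matrix ι κ R} {x : ι → R} :
    (∀ v ∈ A.mulVec '' Ici 0, x ⬝ᵥ v ≤ 0) ↔ x ᵥ* A ≤ 0 := by
  rw [← neg_nonneg, ← forall_dotProduct_nonneg_iff]
  simp only [forall_mem_image, mem_Ici, dotProduct_mulVec, neg_dotProduct, neg_nonneg]

theorem exists_nonneg_dotProduct_nonpos_of_forall_not_strongLT {ι : Type*} [Fintype ι]
    {K : Set (ι → ℝ)} (hK : Convex ℝ K) (hK₀ : 0 ∈ K) (hpos : ∀ v ∈ K, ¬ StrongLT 0 v) :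
    ∃ x : ι → ℝ, x ≠ 0 ∧ 0 ≤ x ∧ ∀ v ∈ K, x ⬝ᵥ v ≤ 0 := by
  classical
  have hint := interior_Ici_eq_setOf_strongLT (0 : ι → ℝ)
  have hne : (interior (Ici (0 : ι → ℝ))).Nonempty := hint ▸ ⟨1, fun _ ↦ one_pos⟩
  have hdisj : Disjoint (interior (Ici 0)) K := by
    rw [hint, disjoint_right]
    exact hpos
  obtain ⟨f, hf₀, hf, hfK⟩ :=
    geometric_hahn_banach_of_nonempty_interior_of_zero_mem (convex_Ici 0) hK
      self_mem_Ici hK₀ hdisj hne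
  obtain ⟨x, hx⟩ := (dotProductEquiv ℝ ι).surjective f.toLinearMap
  have hxf (v : ι → ℝ) : x ⬝ᵥ v = f v := LinearMap.congr_fun hx v
  refine ⟨x, ?_, forall_dotProduct_nonneg_iff.mp fun v hv ↦ hxf v ▸ hf v hv,
    fun v hv ↦ hxf v ▸ hfK v hv⟩
  rintro rfl
  exact hf₀ (ContinuousLinearMap.ext fun v ↦ by simp [← hxf])

theorem xor_exists_dotProduct_nonpos_exists_strongLT {ι : Type*} [Fintype ι] {K : Set (ι → ℝ)}
    (hK : Convex ℝ K) (hK₀ : 0 ∈ K) :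
    Xor (∃ x : ι → ℝ, x ≠ 0 ∧ 0 ≤ x ∧ ∀ v ∈ K, x ⬝ᵥ v ≤ 0) (∃ v ∈ K, StrongLT 0 v) := by
  refine (xor_iff_or_and_not_and _ _).mpr ⟨or_iff_not_imp_right.mpr fun hpos ↦ ?_, ?_⟩
  · push Not at hpos
    exact exists_nonneg_dotProduct_nonpos_of_forall_not_strongLT hK hK₀ hpos
  · rintro ⟨⟨x, hx₀, hx, hxK⟩, v, hvK, hv⟩
    exact (hxK v hvK).not_gt (dotProduct_pos_of_nonneg_of_strongLT hx₀ hx hv)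

theorem farkas_minkowski_real_general {ι κ : Type*} [Fintype ι] [Fintype κ] (A : Matrix ι κ ℝ) :
    Xor (∃ x : ι → ℝ, x ≠ 0 ∧ 0 ≤ x ∧ x ᵥ* A ≤ 0)
      (∃ y : κ → ℝ, 0 ≤ y ∧ StrongLT 0 (A *ᵥ y)) := by
  have hconv : Convex ℝ (A.mulVec '' Ici 0) := (convex_Ici 0).linear_image A.mulVecLin
  have hzero : 0 ∈ A.mulVec '' Ici 0 := ⟨0, self_mem_Ici, A.mulVec_zero⟩
  simpa only [forall_mem_image_mulVec_dotProduct_nonpos_iff, exists_mem_image, mem_Ici]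
    using xor_exists_dotProduct_nonpos_exists_strongLT hconv hzero

theorem farkas_minkowski_real (m n : ℕ) (A : Matrix (Fin m) (Fin n) ℝ) :
    Xor'
      (∃ x : Fin m → ℝ, x ≠ 0 ∧ (∀ i, 0 ≤ x i) ∧ ∀ j, Matrix.vecMul x A j ≤ 0)
      (∃ y : Fin n → ℝ, (∀ j, 0 ≤ y j) ∧ ∀ i, 0 < Matrix.mulVec A y i) :=
  farkas_minkowski_real_general A
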